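/- Let n ≥ 2 and p₁, p₂ ∈ ℂ[x] be polynomials of degree ≤ n-2. If Φ is a ℂ[x]-algebra automorphism of ℂ[x][z,t] such that Φ ≡ id mod x and Φ maps the ideal (xⁿ, z² + t³ + x·p₁(x)) onto the ideal (xⁿ, z² + t³ + x·p₂(x)), then p₁ = p₂. -/

import Mathlib

open MvPolynomial

section core
variable {R : Type*} [CommRing R] [Algebra ℚ R]

/-- every odd number is a nonzerodivisor in a rational algebra -/
lemma nat_cast_mul_eq_zero {k : ℕ} (hk : k ≠ 0) {q : R} (h : (k : R) * q = 0) : q = 0 := by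
  have h2 : algebraMap ℚ R ((k : ℚ)⁻¹) * (k : R) = 1 := by
    rw [← map_natCast (algebraMap ℚ R) k, ← map_mul, inv_mul_cancel₀ (by exact_mod_cast hk), map_one]
  calc q = (algebraMap ℚ R ((k : ℚ)⁻¹) * (k : R)) * q := by rw [h2, one_mul]
    _ = 0 := by rw [mul_assoc, h, mul_zero]

lemma ode_core (s κ : R) (Q : Polynomial R)
    (h : 3 * Polynomial.X ^ 2 * Q + 2 * (Polynomial.X ^ 3 + Polynomial.C s) * Polynomial.derivative Q
      = Polynomial.C κ) : κ = 0 := by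
  by_cases hQ : Q = 0
  · subst hQ
    simpa using h.symm
  exfalso
  set d := Q.natDegree with hd
  have h1 := congrArg (fun p => Polynomial.coeff p (d + 2)) h
  have e : 3 * Polynomial.X ^ 2 * Q + 2 * (Polynomial.X ^ 3 + Polynomial.C s) * Polynomial.derivative Q
     = Polynomial.C 3 * (Q * Polynomial.X ^ 2) + Polynomial.C 2 * (Polynomial.X * Polynomial.derivative Q * Polynomial.X ^ 2)
       + Polynomial.C (2 * s) * Polynomial.derivative Q := by
    simp only [map_mul, Polynomial.C_ofNat]; ring
  have h3 : Q.coeff (d + 2 + 1) = 0 := Polynomial.coeff_eq_zero_of_natDegree_lt (by omega)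
  have h4 : (Polynomial.X * Polynomial.derivative Q).coeff d = d * Q.coeff d := by
    rcases d with _ | d
    · simp
    · rw [Polynomial.coeff_X_mul, Polynomial.coeff_derivative]; push_cast; ring
  simp only [e, Polynomial.coeff_add, Polynomial.coeff_C_mul, Polynomial.coeff_mul_X_pow,
    Polynomial.coeff_derivative, h3, h4] at h1
  rw [Polynomial.coeff_C, if_neg (by omega)] at h1
  have : ((3 + 2 * d : ℕ) : R) * Q.coeff d = 0 := by
    rw [← h1]; push_cast; ring
  have := nat_cast_mul_eq_zero (by omega) this
  rw [hd, Polynomial.coeff_natDegree, Polynomial.leadingCoeff_eq_zero] at this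
  exact hQ this

/-- formal antiderivative with respect to variable `i`. -/
noncomputable def antider (i : Fin 2) : MvPolynomial (Fin 2) R →ₗ[R] MvPolynomial (Fin 2) R :=
  (basisMonomials (Fin 2) R).constr R
    (fun m => monomial (m + Finsupp.single i 1) (algebraMap ℚ R (((m i + 1 : ℕ) : ℚ)⁻¹)))

lemma antider_monomial (i : Fin 2) (m : Fin 2 →₀ ℕ) :
    antider i (monomial m (1 : R)) =
      monomial (m + Finsupp.single i 1) (algebraMap ℚ R (((m i + 1 : ℕ) : ℚ)⁻¹)) := by
  have := (basisMonomials (Fin 2) R).constr_basis R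
    (fun m => monomial (m + Finsupp.single i 1) (algebraMap ℚ R (((m i + 1 : ℕ) : ℚ)⁻¹))) m
  simpa [antider] using this

lemma pderiv_antider (i : Fin 2) (f : MvPolynomial (Fin 2) R) : pderiv i (antider i f) = f := by
  suffices h : (pderiv i : Derivation R (MvPolynomial (Fin 2) R) _).toLinearMap ∘ₗ antider i = LinearMap.id from
    LinearMap.congr_fun h f
  refine (basisMonomials (Fin 2) R).ext fun m => ?_
  simp only [coe_basisMonomials, LinearMap.comp_apply, antider_monomial, LinearMap.id_apply]
  change pderiv i _ = _
  rw [pderiv_monomial]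
  congr 1
  · simp
  · simp only [Finsupp.coe_add, Pi.add_apply, Finsupp.single_eq_same]
    rw [← map_natCast (algebraMap ℚ R), ← map_mul, inv_mul_cancel₀ (by positivity), map_one]

lemma pderiv_antider_ne (i j : Fin 2) (hij : i ≠ j) (f : MvPolynomial (Fin 2) R) :
    pderiv j (antider i f) = antider i (pderiv j f) := by
  suffices h : (pderiv j : Derivation R (MvPolynomial (Fin 2) R) _).toLinearMap ∘ₗ antider i =
     antider i ∘ₗ (pderiv j : Derivation R (MvPolynomial (Fin 2) R) _).toLinearMap from
    LinearMap.congr_fun h f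
  refine (basisMonomials (Fin 2) R).ext fun m => ?_
  simp only [coe_basisMonomials, LinearMap.comp_apply, antider_monomial]
  change pderiv j _ = antider i (pderiv j _)
  rw [pderiv_monomial, pderiv_monomial]
  have e : (monomial (m - Finsupp.single j 1) (1 * (m j : R)) : MvPolynomial (Fin 2) R)
     = (m j : R) • monomial (m - Finsupp.single j 1) 1 := by
    rw [smul_monomial, smul_eq_mul, mul_comm]
  rw [e, map_smul, antider_monomial, smul_monomial]
  have h1 : (m + Finsupp.single i 1 : Fin 2 →₀ ℕ) j = m j := by simp [hij]
  have h2 : (m - Finsupp.single j 1 : Fin 2 →₀ ℕ) i = m i := by simp [hij.symm]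
  rw [h1, h2, smul_eq_mul, mul_comm]
  rcases Nat.eq_zero_or_pos (m j) with h0 | h0
  · simp [h0]
  · suffices he : m + Finsupp.single i 1 - Finsupp.single j 1 =
        m - Finsupp.single j 1 + Finsupp.single i 1 by rw [he]
    ext k
    simp only [Finsupp.coe_add, Finsupp.coe_tsub, Pi.add_apply, Pi.sub_apply]
    by_cases hk : k = j
    · subst hk; simp [hij]
    · simp [Finsupp.single_apply, Ne.symm hk]

lemma poincare (A B : MvPolynomial (Fin 2) R) (h : pderiv 0 A + pderiv 1 B = 0) :
    ∃ H : MvPolynomial (Fin 2) R, pderiv 0 H = B ∧ pderiv 1 H = -A := by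
  set H := antider 0 B with hH
  set A0 := A + pderiv 1 H with hA0
  have h0 : pderiv 0 A0 = 0 := by
    rw [hA0, map_add, hH, pderiv_antider_ne 0 1 (by decide), pderiv_antider, h]
  refine ⟨H - antider 1 A0, ?_, ?_⟩
  · rw [map_sub, hH, pderiv_antider, pderiv_antider_ne 1 0 (by decide), h0, map_zero, sub_zero]
  · rw [map_sub, pderiv_antider, hA0]; ring

lemma reduce (s : R) (H : MvPolynomial (Fin 2) R) :
    ∃ (P Q : Polynomial R) (K : MvPolynomial (Fin 2) R),
      H = Polynomial.aeval (X 1) P + X 0 * Polynomial.aeval (X 1) Q + (X 0 ^ 2 + X 1 ^ 3 + C s) * K := by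
  induction H using MvPolynomial.induction_on with
  | C a => exact ⟨Polynomial.C a, 0, 0, by simp [algebraMap_eq]⟩
  | add p q hp hq =>
    obtain ⟨P, Q, K, h⟩ := hp
    obtain ⟨P', Q', K', h'⟩ := hq
    refine ⟨P + P', Q + Q', K + K', ?_⟩
    rw [h, h', map_add, map_add]; ring
  | mul_X p i hp =>
    obtain ⟨P, Q, K, h⟩ := hp
    fin_cases i
    · refine ⟨-(Polynomial.X ^ 3 + Polynomial.C s) * Q, P, K * X 0 + Polynomial.aeval (X 1) Q, ?_⟩
      rw [h]
      simp [algebraMap_eq]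
      ring
    · refine ⟨P * Polynomial.X, Q * Polynomial.X, K * X 1, ?_⟩
      rw [h]
      simp
      ring

lemma indep (s : R) (P Q : Polynomial R)
    (h : (X 0 ^ 2 + X 1 ^ 3 + C s : MvPolynomial (Fin 2) R) ∣
      Polynomial.aeval (X 1) P + X 0 * Polynomial.aeval (X 1) Q) : P = 0 := by
  nontriviality R
  let θ : MvPolynomial (Fin 2) R →ₐ[R] Polynomial (Polynomial R) :=
    aeval ![Polynomial.X, Polynomial.C Polynomial.X]
  have h0 : θ (X 0) = Polynomial.X := by simp [θ]
  have h1 : θ (X 1) = Polynomial.C Polynomial.X := by simp [θ]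
  have hP : ∀ P : Polynomial R, θ (Polynomial.aeval (X 1) P) = Polynomial.C P := by
    intro P
    rw [← Polynomial.aeval_algHom_apply, h1]
    induction P using Polynomial.induction_on' with
    | add p q hp hq => simp [hp, hq]
    | monomial n a =>
      simp [← Polynomial.C_mul_X_pow_eq_monomial]
  have hc : θ (C s) = Polynomial.C (Polynomial.C s) := by
    rw [← algebraMap_eq, AlgHom.commutes]; rfl
  have h2 := map_dvd θ h
  simp only [map_add, map_mul, map_pow, hP, h0, h1, hc] at h2
  set G : Polynomial (Polynomial R) := Polynomial.X ^ 2 + Polynomial.C Polynomial.X ^ 3 + Polynomial.C (Polynomial.C s) with hG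
  have hG' : G = Polynomial.X ^ 2 + Polynomial.C (Polynomial.X ^ 3 + Polynomial.C s) := by
    rw [hG]; simp; ring
  have hm : G.Monic := by rw [hG']; exact Polynomial.monic_X_pow_add_C _ (by norm_num)
  have hdeg : G.degree = 2 := by rw [hG']; exact Polynomial.degree_X_pow_add_C (by norm_num) _
  have h3 : Polynomial.C P + Polynomial.X * Polynomial.C Q = 0 := by
    by_contra hne
    refine hm.not_dvd_of_degree_lt hne ?_ h2
    rw [hdeg, add_comm, mul_comm]
    exact lt_of_le_of_lt Polynomial.degree_linear_le (by norm_num)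
  have := congrArg (fun p => Polynomial.coeff p 0) h3
  simpa using this

lemma pderiv_aeval_X (i : Fin 2) (P : Polynomial R) :
    pderiv i (Polynomial.aeval (X 1 : MvPolynomial (Fin 2) R) P) =
      Polynomial.aeval (X 1) (Polynomial.derivative P) * pderiv i (X 1) := by
  rw [Derivation.map_aeval, smul_eq_mul]

lemma core (s κ : R) (A B : MvPolynomial (Fin 2) R) (h : pderiv 0 A + pderiv 1 B = 0)
    (hg : (X 0 ^ 2 + X 1 ^ 3 + C s : MvPolynomial (Fin 2) R) ∣
      A * (2 * X 0) + B * (3 * X 1 ^ 2) - C κ) : κ = 0 := by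
  obtain ⟨H, hB, hA⟩ := poincare A B h
  obtain ⟨P, Q, K, rfl⟩ := reduce s H
  have hA' : A = -pderiv 1 (Polynomial.aeval (X 1) P + X 0 * Polynomial.aeval (X 1) Q
    + (X 0 ^ 2 + X 1 ^ 3 + C s) * K) := by rw [hA]; ring
  have e10 : pderiv (1 : Fin 2) (X 0 : MvPolynomial (Fin 2) R) = 0 := pderiv_X_of_ne (by decide)
  have e01 : pderiv (0 : Fin 2) (X 1 : MvPolynomial (Fin 2) R) = 0 := pderiv_X_of_ne (by decide)
  rw [hA', ← hB] at hg
  simp only [map_add, Derivation.leibniz, pderiv_aeval_X, e10, e01, pderiv_X_self, pderiv_C,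
    Derivation.leibniz_pow, smul_eq_mul, nsmul_eq_mul] at hg
  apply ode_core s κ Q
  rw [← sub_eq_zero]
  apply indep s _ (-2 * Polynomial.derivative P)
  obtain ⟨L, hL⟩ := hg
  refine ⟨L + 2 * Polynomial.aeval (X 1) (Polynomial.derivative Q)
     + 2 * X 0 * pderiv 1 K - 3 * X 1 ^ 2 * pderiv 0 K, ?_⟩
  simp only [map_add, map_sub, map_mul, map_neg, map_pow, Polynomial.aeval_X, Polynomial.aeval_C,
    map_ofNat, algebraMap_eq]
  push_cast at hL
  linear_combination hL

end core

section part2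
local notation "𝕋" => MvPolynomial (Fin 2) (Polynomial ℂ)

lemma mod_core (n : ℕ) (s κ : Polynomial ℂ) (A B : 𝕋) (h : pderiv 0 A + pderiv 1 B = 0)
    (hg : A * (2 * X 0) + B * (3 * X 1 ^ 2) - C κ ∈
      Ideal.span {(C (Polynomial.X ^ n) : 𝕋), X 0 ^ 2 + X 1 ^ 3 + C s}) :
    Polynomial.X ^ n ∣ κ := by
  let q := Ideal.Quotient.mk (Ideal.span {(Polynomial.X ^ n : Polynomial ℂ)})
  have h1 : q (Polynomial.X ^ n) = 0 :=
    Ideal.Quotient.eq_zero_iff_mem.2 (Ideal.mem_span_singleton_self _)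
  suffices q κ = 0 from Ideal.mem_span_singleton.1 (Ideal.Quotient.eq_zero_iff_mem.1 this)
  apply core (q s) (q κ) (map q A) (map q B)
  · rw [pderiv_map, pderiv_map, ← map_add, h, map_zero]
  · obtain ⟨a, b, hab⟩ := Ideal.mem_span_pair.1 hg
    refine ⟨map q b, ?_⟩
    have := congrArg (map q) hab
    simp only [map_add, map_sub, map_mul, map_C, map_X, map_pow, map_ofNat] at this
    rw [← map_pow (C : _ →+* MvPolynomial (Fin 2) _), ← map_pow q, h1] at this
    rw [← this, C_0]; ring

/-- ring homomorphism encoding the coefficientwise derivative -/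
noncomputable def dxHom : 𝕋 →+* TrivSqZeroExt 𝕋 𝕋 :=
  eval₂Hom
    { toFun := fun a => TrivSqZeroExt.inl (C a) + TrivSqZeroExt.inr (C (Polynomial.derivative a))
      map_one' := by ext <;> simp
      map_mul' := by
        intro a b
        ext
        · simp
        · simp; ring
      map_zero' := by ext <;> simp
      map_add' := by
        intro a b
        ext
        · simp
        · simp }
    (fun i => TrivSqZeroExt.inl (X i))

lemma dxHom_C (a : Polynomial ℂ) : dxHom (C a) =
    TrivSqZeroExt.inl (C a) + TrivSqZeroExt.inr (C (Polynomial.derivative a)) := by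
  simp [dxHom]

lemma dxHom_X (i : Fin 2) : dxHom (X i) = TrivSqZeroExt.inl (X i) := by
  simp [dxHom]

lemma dxHom_fst (f : 𝕋) : (dxHom f).fst = f := by
  induction f using MvPolynomial.induction_on with
  | C a => simp [dxHom_C]
  | add p q hp hq => simp [hp, hq]
  | mul_X p i hp => simp [hp, dxHom_X]

/-- The derivative with respect to `x`. -/
noncomputable def dx : Derivation ℤ 𝕋 𝕋 where
  toFun f := (dxHom f).snd
  map_add' f g := by simp
  map_smul' k f := by simp
  map_one_eq_zero' := by simp
  leibniz' f g := by simp [dxHom_fst, mul_comm]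

lemma dx_C (a : Polynomial ℂ) : dx (C a) = C (Polynomial.derivative a) := by
  change (dxHom (C a)).snd = _
  simp [dxHom_C]

lemma dx_X (i : Fin 2) : dx (X i) = 0 := by
  change (dxHom (X i)).snd = _
  simp [dxHom_X]

/-- partial derivative over the integers -/
noncomputable def pd (i : Fin 2) : Derivation ℤ 𝕋 𝕋 := (pderiv i).restrictScalars ℤ

lemma pd_apply (i : Fin 2) (f : 𝕋) : pd i f = pderiv i f := rfl

lemma der_ext {D1 D2 : Derivation ℤ 𝕋 𝕋} (hC : ∀ a, D1 (C a) = D2 (C a))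
    (hX : ∀ i, D1 (X i) = D2 (X i)) (f : 𝕋) : D1 f = D2 f := by
  induction f using MvPolynomial.induction_on with
  | C a => exact hC a
  | add p q hp hq => simp [hp, hq]
  | mul_X p i hp => simp [hp, hX]

lemma pd01 : pd 0 (X 1) = 0 := pderiv_X_of_ne (by decide)
lemma pd10 : pd 1 (X 0) = 0 := pderiv_X_of_ne (by decide)
lemma pd00 (i : Fin 2) : pd i (X i) = 1 := pderiv_X_self _
lemma pdC (i : Fin 2) (a) : pd i (C a) = 0 := pderiv_C

/-- the Euler-type vector field -/
noncomputable def vf (m : ℕ) (σ : Polynomial ℂ) : Derivation ℤ 𝕋 𝕋 :=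
  (C (6 * σ * Polynomial.X) : 𝕋) • dx +
    (C (3 * ((m : Polynomial ℂ) * σ + Polynomial.X * Polynomial.derivative σ)) * X 0 : 𝕋) • pd 0 +
    (C (2 * ((m : Polynomial ℂ) * σ + Polynomial.X * Polynomial.derivative σ)) * X 1 : 𝕋) • pd 1

lemma vf_apply (m : ℕ) (σ : Polynomial ℂ) (f : 𝕋) : vf m σ f =
  (C (6 * σ * Polynomial.X) : 𝕋) * dx f +
    (C (3 * ((m : Polynomial ℂ) * σ + Polynomial.X * Polynomial.derivative σ)) * X 0 : 𝕋) * pd 0 f +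
    (C (2 * ((m : Polynomial ℂ) * σ + Polynomial.X * Polynomial.derivative σ)) * X 1 : 𝕋) * pd 1 f := rfl

/-- Poisson bracket -/
noncomputable def br (f g : 𝕋) : 𝕋 := pd 0 f * pd 1 g - pd 1 f * pd 0 g

lemma pd0_vf (m : ℕ) (σ : Polynomial ℂ) (f : 𝕋) : pd 0 (vf m σ f) = vf m σ (pd 0 f) +
    C (3 * ((m : Polynomial ℂ) * σ + Polynomial.X * Polynomial.derivative σ)) * pd 0 f := by
  have h : ⁅pd 0, vf m σ⁆ f =
    ((C (3 * ((m : Polynomial ℂ) * σ + Polynomial.X * Polynomial.derivative σ)) : 𝕋) • pd 0) f := by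
    apply der_ext
    · intro a
      simp only [Derivation.commutator_apply, vf_apply, Derivation.smul_apply, dx_C, pdC, map_zero,
        mul_zero, add_zero, smul_eq_mul, Derivation.leibniz, sub_zero]
    · intro i
      fin_cases i
      all_goals simp [Derivation.commutator_apply, vf_apply, dx_X, pdC, pd01, pd10, pd00]
  rw [Derivation.commutator_apply, Derivation.smul_apply, smul_eq_mul] at h
  linear_combination h

lemma pd1_vf (m : ℕ) (σ : Polynomial ℂ) (f : 𝕋) : pd 1 (vf m σ f) = vf m σ (pd 1 f) +
    C (2 * ((m : Polynomial ℂ) * σ + Polynomial.X * Polynomial.derivative σ)) * pd 1 f := by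
  have h : ⁅pd 1, vf m σ⁆ f =
    ((C (2 * ((m : Polynomial ℂ) * σ + Polynomial.X * Polynomial.derivative σ)) : 𝕋) • pd 1) f := by
    apply der_ext
    · intro a
      simp only [Derivation.commutator_apply, vf_apply, Derivation.smul_apply, dx_C, pdC, map_zero,
        mul_zero, add_zero, smul_eq_mul, Derivation.leibniz, sub_zero]
    · intro i
      fin_cases i
      all_goals simp [Derivation.commutator_apply, vf_apply, dx_X, pdC, pd01, pd10, pd00]
  rw [Derivation.commutator_apply, Derivation.smul_apply, smul_eq_mul] at h
  linear_combination h

lemma vf_br (m : ℕ) (σ : Polynomial ℂ) (f g : 𝕋) : vf m σ (br f g) =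
    br (vf m σ f) g + br f (vf m σ g) -
      C (5 * ((m : Polynomial ℂ) * σ + Polynomial.X * Polynomial.derivative σ)) * br f g := by
  simp only [br, pd0_vf, pd1_vf, map_sub, Derivation.leibniz, smul_eq_mul]
  simp only [map_mul, map_ofNat]
  ring

lemma vf_g (m : ℕ) (σ : Polynomial ℂ) :
    vf m σ (X 0 ^ 2 + X 1 ^ 3 + C (Polynomial.X ^ m * σ)) =
    C (6 * ((m : Polynomial ℂ) * σ + Polynomial.X * Polynomial.derivative σ)) *
      (X 0 ^ 2 + X 1 ^ 3 + C (Polynomial.X ^ m * σ)) := by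
  have hx : Polynomial.X * Polynomial.derivative (Polynomial.X ^ m * σ) =
      Polynomial.X ^ m * ((m : Polynomial ℂ) * σ + Polynomial.X * Polynomial.derivative σ) := by
    rcases m with _ | m
    · simp
    · rw [Polynomial.derivative_mul, Polynomial.derivative_X_pow]
      simp
      ring
  have hx' := congrArg (C : Polynomial ℂ →+* 𝕋) hx
  rw [vf_apply]
  simp only [map_add, Derivation.leibniz_pow, dx_X, dx_C, pdC, pd01, pd10, pd00, smul_eq_mul,
    nsmul_eq_mul, mul_zero, add_zero, zero_add, mul_one]
  simp only [map_mul, map_ofNat, map_add, map_natCast] at hx' ⊢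
  push_cast
  linear_combination 6 * C σ * hx'

lemma vf_ideal (m n : ℕ) (σ : Polynomial ℂ) (f : 𝕋)
    (hf : f ∈ Ideal.span {(C (Polynomial.X ^ n) : 𝕋), X 0 ^ 2 + X 1 ^ 3 + C (Polynomial.X ^ m * σ)}) :
    vf m σ f ∈
      Ideal.span {(C (Polynomial.X ^ n) : 𝕋), X 0 ^ 2 + X 1 ^ 3 + C (Polynomial.X ^ m * σ)} := by
  obtain ⟨a, b, rfl⟩ := Ideal.mem_span_pair.1 hf
  have h1 : vf m σ (C (Polynomial.X ^ n)) = C (6 * σ * (n : Polynomial ℂ)) * C (Polynomial.X ^ n) := by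
    rw [vf_apply]
    simp only [dx_C, pdC, mul_zero, add_zero, ← map_mul]
    congr 1
    rcases n with _ | n
    · simp
    · rw [Polynomial.derivative_X_pow]
      simp
      ring
  rw [map_add, Derivation.leibniz, Derivation.leibniz, h1, vf_g]
  simp only [smul_eq_mul]
  refine Ideal.mem_span_pair.2 ⟨a * C (6 * σ * (n : Polynomial ℂ)) + vf m σ a,
    b * C (6 * ((m : Polynomial ℂ) * σ + Polynomial.X * Polynomial.derivative σ)) + vf m σ b, ?_⟩
  ring

lemma chain (Φ : 𝕋 →ₐ[Polynomial ℂ] 𝕋) (i : Fin 2) (f : 𝕋) :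
    pd i (Φ f) = Φ (pd 0 f) * pd i (Φ (X 0)) + Φ (pd 1 f) * pd i (Φ (X 1)) := by
  have hC : ∀ a, Φ (C a) = C a := fun a => Φ.commutes a
  induction f using MvPolynomial.induction_on with
  | C a => simp [hC, pdC]
  | add p q hp hq => simp only [map_add, hp, hq]; ring
  | mul_X p j hp =>
    rw [map_mul, Derivation.leibniz, hp, Derivation.leibniz, Derivation.leibniz]
    simp only [smul_eq_mul, map_add, map_mul]
    fin_cases j
    · simp [pd01, pd10, pd00]; ring
    · simp [pd01, pd10, pd00]; ring

lemma br_map (Φ : 𝕋 →ₐ[Polynomial ℂ] 𝕋) (f g : 𝕋) :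
    br (Φ f) (Φ g) = br (Φ (X 0)) (Φ (X 1)) * Φ (br f g) := by
  simp only [br]
  rw [chain Φ 0 f, chain Φ 1 f, chain Φ 0 g, chain Φ 1 g]
  simp only [map_sub, map_mul]
  ring

lemma br_XX : br (X 0) (X 1) = 1 := by simp [br, pd00, pd01, pd10]

lemma jac_const (Φ : 𝕋 ≃ₐ[Polynomial ℂ] 𝕋) :
    ∃ c : ℂ, c ≠ 0 ∧ br (Φ (X 0)) (Φ (X 1)) = C (Polynomial.C c) := by
  have h := br_map Φ.toAlgHom (Φ.symm (X 0)) (Φ.symm (X 1))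
  simp only [AlgEquiv.coe_toAlgHom, AlgEquiv.apply_symm_apply, br_XX] at h
  have hu : IsUnit (br (Φ (X 0)) (Φ (X 1))) := IsUnit.of_mul_eq_one _ h.symm
  rw [MvPolynomial.isUnit_iff_eq_C_of_isReduced] at hu
  obtain ⟨r, hr, h2⟩ := hu
  obtain ⟨c, hc, rfl⟩ := Polynomial.isUnit_iff.1 hr
  exact ⟨c, hc.ne_zero, h2⟩

/-- The main identity: the conjugated vector field. -/
lemma conj_div (Φ : 𝕋 ≃ₐ[Polynomial ℂ] 𝕋) (m : ℕ) (σ : Polynomial ℂ) :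
    pd 0 (Φ (vf m σ (Φ.symm (X 0)))) + pd 1 (Φ (vf m σ (Φ.symm (X 1)))) =
      C (5 * ((m : Polynomial ℂ) * σ + Polynomial.X * Polynomial.derivative σ)) := by
  obtain ⟨c, hc, hJ⟩ := jac_const Φ
  have hb : ∀ f g, br (Φ f) (Φ g) = C (Polynomial.C c) * Φ (br f g) := fun f g => by
    rw [← hJ]; exact br_map Φ.toAlgHom f g
  set F := Φ.symm (X 0) with hF
  set G := Φ.symm (X 1) with hG
  have hΦF : Φ F = X 0 := by simp [F]
  have hΦG : Φ G = X 1 := by simp [G]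
  set e := C (5 * ((m : Polynomial ℂ) * σ + Polynomial.X * Polynomial.derivative σ) : Polynomial ℂ) with he
  have h0 := hb F G
  rw [hΦF, hΦG, br_XX] at h0
  have hcc : (C (Polynomial.C c⁻¹) : 𝕋) * C (Polynomial.C c) = 1 := by
    rw [← C_mul, ← Polynomial.C_mul, inv_mul_cancel₀ hc]; simp
  have hFG : br F G = C (Polynomial.C c⁻¹) := by
    apply Φ.injective
    rw [show Φ (C (Polynomial.C c⁻¹)) = C (Polynomial.C c⁻¹) from Φ.commutes _]
    linear_combination (Φ (br F G)) * (-hcc) - C (Polynomial.C c⁻¹) * h0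
  have h1 := vf_br m σ F G
  rw [hFG] at h1
  have h2 : vf m σ (C (Polynomial.C c⁻¹)) = 0 := by
    rw [vf_apply, dx_C, pdC, pdC]; simp
  rw [h2] at h1
  have h3 := congrArg Φ h1
  rw [map_zero, map_sub, map_add, map_mul, show Φ (C _) = C _ from Φ.commutes _,
    show Φ (C (Polynomial.C c⁻¹)) = C _ from Φ.commutes _] at h3
  have h4 := hb (vf m σ F) G
  have h5 := hb F (vf m σ G)
  rw [hΦG] at h4
  rw [hΦF] at h5
  have h6 : br (Φ (vf m σ F)) (X 1) = pd 0 (Φ (vf m σ F)) := by simp [br, pd00, pd01]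
  have h7 : br (X 0) (Φ (vf m σ G)) = pd 1 (Φ (vf m σ G)) := by simp [br, pd00, pd10]
  rw [← h6, ← h7, h4, h5]
  linear_combination (-C (Polynomial.C c)) * h3 + e * hcc

lemma conj_apply (Φ : 𝕋 ≃ₐ[Polynomial ℂ] 𝕋) (m : ℕ) (σ : Polynomial ℂ) (f : 𝕋) :
    Φ (vf m σ (Φ.symm f)) = C (6 * σ * Polynomial.X) * dx f
      + Φ (vf m σ (Φ.symm (X 0))) * pd 0 f + Φ (vf m σ (Φ.symm (X 1))) * pd 1 f := by
  have hC : ∀ a, Φ (C a) = C a := fun a => Φ.commutes a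
  have hC' : ∀ a, Φ.symm (C a) = C a := fun a => Φ.symm.commutes a
  induction f using MvPolynomial.induction_on with
  | C a =>
    rw [hC', vf_apply, pdC, pdC, dx_C]
    simp [hC]
  | add p q hp hq => simp only [map_add, hp, hq]; ring
  | mul_X p j hp =>
    simp only [map_mul Φ.symm, Derivation.leibniz, smul_eq_mul, map_add Φ, map_mul Φ, hp,
      AlgEquiv.apply_symm_apply, dx_X]
    fin_cases j
    · simp [pd01, pd10, pd00]; ring
    · simp [pd01, pd10, pd00]; ring

lemma wronskian (n m : ℕ) (σ₁ σ₂ : Polynomial ℂ) (Φ : 𝕋 ≃ₐ[Polynomial ℂ] 𝕋)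
    (hmap : Ideal.map (Φ : 𝕋 →+* 𝕋)
        (Ideal.span {(C (Polynomial.X ^ n) : 𝕋), X 0 ^ 2 + X 1 ^ 3 + C (Polynomial.X ^ m * σ₁)}) =
      Ideal.span {(C (Polynomial.X ^ n) : 𝕋), X 0 ^ 2 + X 1 ^ 3 + C (Polynomial.X ^ m * σ₂)}) :
    Polynomial.X ^ n ∣ Polynomial.X ^ (m + 1) * σ₂ *
      (σ₂ * Polynomial.derivative σ₁ - σ₁ * Polynomial.derivative σ₂) := by
  set A := Φ (vf m σ₁ (Φ.symm (X 0))) with hA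
  set B := Φ (vf m σ₁ (Φ.symm (X 1))) with hB
  set κ₁ : Polynomial ℂ := (m : Polynomial ℂ) * σ₁ + Polynomial.X * Polynomial.derivative σ₁ with hκ₁
  set κ₂ : Polynomial ℂ := (m : Polynomial ℂ) * σ₂ + Polynomial.X * Polynomial.derivative σ₂ with hκ₂
  set g₂ : 𝕋 := X 0 ^ 2 + X 1 ^ 3 + C (Polynomial.X ^ m * σ₂) with hg₂
  set I₂ := Ideal.span {(C (Polynomial.X ^ n) : 𝕋), g₂} with hI₂
  have hdiv : pd 0 A + pd 1 B = C (5 * κ₁) := conj_div Φ m σ₁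
  have hg : g₂ ∈ I₂ := Ideal.subset_span (by simp)
  have hD : Φ (vf m σ₁ (Φ.symm g₂)) ∈ I₂ := by
    have h1 : g₂ ∈ Ideal.map (Φ : 𝕋 →+* 𝕋) _ := hmap ▸ hg
    obtain ⟨y, hy, hy2⟩ := (Ideal.mem_map_iff_of_surjective _ (show Function.Surjective (Φ : 𝕋 →+* 𝕋) from Φ.surjective)).1 h1
    have : Φ.symm g₂ = y := by rw [← hy2]; simp
    rw [this, ← hmap]
    exact Ideal.mem_map_of_mem (Φ : 𝕋 →+* 𝕋) (vf_ideal m n σ₁ y hy)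
  have hV : vf m σ₂ g₂ ∈ I₂ := vf_ideal m n σ₂ g₂ hg
  rw [conj_apply, ← hA, ← hB] at hD
  rw [vf_apply, ← hκ₂] at hV
  have hg0 : pd 0 g₂ = 2 * X 0 := by
    simp [g₂, Derivation.leibniz_pow, pd00, pd01, pdC]
  have hg1 : pd 1 g₂ = 3 * X 1 ^ 2 := by
    simp [g₂, Derivation.leibniz_pow, pd00, pd10, pdC]
  rw [hg0, hg1] at hD hV
  have key := mod_core n (Polynomial.X ^ m * σ₂)
    (30 * (σ₂ * κ₁ - σ₁ * κ₂) * (Polynomial.X ^ m * σ₂))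
    (C (5 * σ₂) * A - C (15 * σ₁ * κ₂ + 15 * (σ₂ * κ₁ - σ₁ * κ₂)) * X 0)
    (C (5 * σ₂) * B - C (10 * σ₁ * κ₂ + 10 * (σ₂ * κ₁ - σ₁ * κ₂)) * X 1)
    (by
      simp only [← pd_apply, map_sub, Derivation.leibniz, pd00, pdC, smul_eq_mul]
      simp only [map_mul, map_add, map_sub, map_ofNat] at hdiv ⊢
      linear_combination 5 * C σ₂ * hdiv)
    (by
      have h1 := I₂.mul_mem_left (C (5 * σ₂)) hD
      have h2 := I₂.mul_mem_left (C (5 * σ₁)) hV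
      have h3 := I₂.mul_mem_left (C (30 * (σ₂ * κ₁ - σ₁ * κ₂))) hg
      have h4 := I₂.sub_mem (I₂.sub_mem h1 h2) h3
      convert h4 using 1
      rw [hg₂]
      simp only [map_mul, map_add, map_sub, map_ofNat]
      ring)
  have e : 30 * (σ₂ * κ₁ - σ₁ * κ₂) * (Polynomial.X ^ m * σ₂) =
      Polynomial.C 30 * (Polynomial.X ^ (m + 1) * σ₂ *
      (σ₂ * Polynomial.derivative σ₁ - σ₁ * Polynomial.derivative σ₂)) := by
    rw [hκ₁, hκ₂, Polynomial.C_ofNat]; ring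
  rw [e] at key
  exact (IsUnit.dvd_mul_left (Polynomial.isUnit_C.2 (by simp))).1 key

lemma X_dvd_iff' (p : Polynomial ℂ) : Polynomial.X ∣ p ↔ p.eval 0 = 0 := by
  rw [Polynomial.X_dvd_iff, Polynomial.coeff_zero_eq_eval_zero]

lemma leading (n m : ℕ) (hmn : m < n) (s₁ s₂ : Polynomial ℂ) (hX₁ : Polynomial.X ∣ s₁)
    (hX₂ : Polynomial.X ∣ s₂)
    (h₂ : Polynomial.X ^ m ∣ s₂)
    (Φ : 𝕋 ≃ₐ[Polynomial ℂ] 𝕋)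
    (hmodz : (C Polynomial.X : 𝕋) ∣ Φ (X 0) - X 0)
    (hmodt : (C Polynomial.X : 𝕋) ∣ Φ (X 1) - X 1)
    (hmap : Ideal.map (Φ : 𝕋 →+* 𝕋)
        (Ideal.span {(C (Polynomial.X ^ n) : 𝕋), X 0 ^ 2 + X 1 ^ 3 + C s₁}) =
      Ideal.span {(C (Polynomial.X ^ n) : 𝕋), X 0 ^ 2 + X 1 ^ 3 + C s₂}) :
    Polynomial.X ^ (m + 1) ∣ s₁ - s₂ := by
  have hC : ∀ a, Φ (C a) = C a := fun a => Φ.commutes a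
  have hmem : Φ (X 0 ^ 2 + X 1 ^ 3 + C s₁) ∈
      Ideal.span {(C (Polynomial.X ^ n) : 𝕋), X 0 ^ 2 + X 1 ^ 3 + C s₂} := by
    rw [← hmap]
    exact Ideal.mem_map_of_mem (Φ : 𝕋 →+* 𝕋) (Ideal.subset_span (by simp))
  obtain ⟨v, u, huv⟩ := Ideal.mem_span_pair.1 hmem
  rw [map_add, map_add, map_pow, map_pow, hC] at huv
  obtain ⟨z', hz'⟩ := hmodz
  obtain ⟨t', ht'⟩ := hmodt
  let ev : Polynomial ℂ →+* ℂ := Polynomial.evalRingHom 0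
  have hevX : ev Polynomial.X = 0 := by simp [ev]
  have hz0 : map ev (Φ (X 0)) = X 0 := by
    have := congrArg (map ev) hz'
    simp only [map_sub, map_mul, map_C, map_X, hevX, C_0, zero_mul] at this
    exact sub_eq_zero.1 this
  have ht0 : map ev (Φ (X 1)) = X 1 := by
    have := congrArg (map ev) ht'
    simp only [map_sub, map_mul, map_C, map_X, hevX, C_0, zero_mul] at this
    exact sub_eq_zero.1 this
  have hs1 : ev s₁ = 0 := (X_dvd_iff' _).1 hX₁
  have hs2 : ev s₂ = 0 := (X_dvd_iff' _).1 hX₂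
  have hu : map ev u = 1 := by
    have h := congrArg (map ev) huv
    simp only [map_add, map_mul, map_C, map_X, map_pow, hevX, hz0, ht0, hs1, hs2, C_0,
      zero_pow (show n ≠ 0 by omega), mul_zero, zero_add, add_zero] at h
    have hne : (X 0 ^ 2 + X 1 ^ 3 : MvPolynomial (Fin 2) ℂ) ≠ 0 := by
      intro h0
      have := congrArg (MvPolynomial.eval ![1, 0]) h0
      simp at this
    exact mul_right_cancel₀ hne (by rw [h, one_mul])
  let ε : 𝕋 →+* Polynomial ℂ := MvPolynomial.eval (fun _ => 0)
  have hεX : ∀ i, ε (X i) = 0 := fun i => by simp [ε]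
  have hεC : ∀ a, ε (C a) = a := fun a => by simp [ε]
  have hεu : Polynomial.X ∣ ε u - 1 := by
    rw [X_dvd_iff']
    have h1 : ∀ u, ev (ε u) = MvPolynomial.eval (fun _ => 0) (map ev u) := by
      intro u
      induction u using MvPolynomial.induction_on with
      | C a => simp [ε]
      | add p q hp hq => simp [hp, hq]
      | mul_X p i hp => simp [hεX]
    have h1 := h1 u
    rw [hu, map_one] at h1
    change ev _ = 0
    rw [map_sub, h1, map_one, sub_self]
  set a := ε (Φ (X 0)) with ha
  set b := ε (Φ (X 1)) with hb
  have hXa : Polynomial.X ∣ a := by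
    have := congrArg ε hz'
    rw [map_sub, hεX, sub_zero, map_mul, hεC] at this
    exact ⟨_, this⟩
  have hXb : Polynomial.X ∣ b := by
    have := congrArg ε ht'
    rw [map_sub, hεX, sub_zero, map_mul, hεC] at this
    exact ⟨_, this⟩
  have hXn : Polynomial.X ^ (m + 1) ∣ (Polynomial.X ^ n : Polynomial ℂ) := pow_dvd_pow _ hmn
  have hXn' : Polynomial.X ^ m ∣ (Polynomial.X ^ n : Polynomial ℂ) := pow_dvd_pow _ hmn.le
  have hder : ∀ i, Polynomial.X ^ m ∣ 2 * a * ε (pd i (Φ (X 0))) + 3 * b ^ 2 * ε (pd i (Φ (X 1))) := by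
    intro i
    have h := congrArg (fun w => ε (pd i w)) huv
    simp only [map_add, Derivation.leibniz, Derivation.leibniz_pow, pdC, smul_eq_mul, nsmul_eq_mul,
      map_mul, map_pow, hεX, hεC, map_zero, map_natCast, ← ha, ← hb] at h
    have h' : 2 * a * ε (pd i (Φ (X 0))) + 3 * b ^ 2 * ε (pd i (Φ (X 1))) =
      Polynomial.X ^ n * ε (pd i v) + s₂ * ε (pd i u) := by
      push_cast at h
      simp at h
      linear_combination -h
    rw [h']
    exact dvd_add (hXn'.mul_right _) (h₂.mul_right _)
  obtain ⟨c, hc, hJ⟩ := jac_const Φ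
  have hJ' := congrArg ε hJ
  rw [hεC, br, map_sub, map_mul, map_mul] at hJ'
  set j00 := ε (pd 0 (Φ (X 0)))
  set j01 := ε (pd 0 (Φ (X 1)))
  set j10 := ε (pd 1 (Φ (X 0)))
  set j11 := ε (pd 1 (Φ (X 1)))
  have hma : Polynomial.X ^ m ∣ a := by
    have : Polynomial.X ^ m ∣ Polynomial.C (2 * c) * a := by
      have e : Polynomial.C (2 * c) * a = (2 * a * j00 + 3 * b ^ 2 * j01) * j11
          - (2 * a * j10 + 3 * b ^ 2 * j11) * j01 := by
        rw [map_mul, ← hJ', Polynomial.C_ofNat]; ring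
      rw [e]
      exact dvd_sub ((hder 0).mul_right _) ((hder 1).mul_right _)
    exact (IsUnit.dvd_mul_left (Polynomial.isUnit_C.2 (by simp [hc]))).1 this
  have hmb : Polynomial.X ^ m ∣ b ^ 2 := by
    have : Polynomial.X ^ m ∣ Polynomial.C (3 * c) * b ^ 2 := by
      have e : Polynomial.C (3 * c) * b ^ 2 = (2 * a * j10 + 3 * b ^ 2 * j11) * j00
          - (2 * a * j00 + 3 * b ^ 2 * j01) * j10 := by
        rw [map_mul, ← hJ', Polynomial.C_ofNat]; ring
      rw [e]
      exact dvd_sub ((hder 1).mul_right _) ((hder 0).mul_right _)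
    exact (IsUnit.dvd_mul_left (Polynomial.isUnit_C.2 (by simp [hc]))).1 this
  have h := congrArg ε huv
  simp only [map_add, map_mul, map_pow, hεX, hεC, ← ha, ← hb] at h
  have e : s₁ - s₂ = ε v * Polynomial.X ^ n + (ε u - 1) * s₂ - a * a - b ^ 2 * b := by
    simp at h
    linear_combination -h
  rw [e, pow_succ]
  rw [pow_succ] at hXn
  refine dvd_sub (dvd_sub (dvd_add (hXn.mul_left _) ?_) (mul_dvd_mul hma hXa)) (mul_dvd_mul hmb hXb)
  rw [mul_comm (ε u - 1)]
  exact mul_dvd_mul h₂ hεu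

lemma finish (n m : ℕ) (σ₁ σ₂ : Polynomial ℂ) (h0 : ¬ Polynomial.X ∣ σ₂)
    (h1 : Polynomial.X ∣ σ₁ - σ₂)
    (hW : Polynomial.X ^ n ∣ Polynomial.X ^ (m + 1) * σ₂ *
      (σ₂ * Polynomial.derivative σ₁ - σ₁ * Polynomial.derivative σ₂)) (j : ℕ) (hj : m + j < n) :
    Polynomial.X ^ (j + 1) ∣ σ₁ - σ₂ := by
  induction j with
  | zero => simpa using h1
  | succ j ih =>
    obtain ⟨e, he⟩ := ih (by omega)
    have hσ : σ₁ = σ₂ + Polynomial.X ^ (j + 1) * e := by rw [← he]; ring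
    have hd : Polynomial.derivative σ₁ = Polynomial.derivative σ₂ +
        (((j + 1 : ℕ) : Polynomial ℂ) * Polynomial.X ^ j * e + Polynomial.X ^ (j + 1) * Polynomial.derivative e) := by
      rw [hσ, Polynomial.derivative_add, Polynomial.derivative_mul, Polynomial.derivative_X_pow]
      simp
    have hp : Polynomial.X ^ (m + 1) * σ₂ *
      (σ₂ * Polynomial.derivative σ₁ - σ₁ * Polynomial.derivative σ₂) =
      Polynomial.X ^ (m + j + 1) * (σ₂ * (σ₂ * (((j + 1 : ℕ) : Polynomial ℂ) * e) + Polynomial.X * (σ₂ * Polynomial.derivative e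
        - e * Polynomial.derivative σ₂))) := by
      rw [hd, hσ]; push_cast; ring
    rw [hp] at hW
    have h3 : (Polynomial.X : Polynomial ℂ) ^ (m + j + 1) * Polynomial.X ∣ _ :=
      (pow_succ (Polynomial.X : Polynomial ℂ) (m + j + 1)) ▸ (pow_dvd_pow _ (by omega)).trans hW
    have h4 := (mul_dvd_mul_iff_left (pow_ne_zero _ Polynomial.X_ne_zero)).1 h3
    have hpr := Polynomial.prime_X (R := ℂ)
    have h5 := (hpr.dvd_or_dvd h4).resolve_left h0
    have h6 := (dvd_add_left (Dvd.intro _ rfl)).1 h5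
    have h7 := (hpr.dvd_or_dvd h6).resolve_left h0
    have h8 : Polynomial.X ∣ e := by
      rw [← Polynomial.C_eq_natCast] at h7
      exact (IsUnit.dvd_mul_left (Polynomial.isUnit_C.2 (by
        rw [isUnit_iff_ne_zero]; exact_mod_cast Nat.succ_ne_zero j))).1 h7
    rw [he, pow_succ]
    exact mul_dvd_mul_left _ h8

end part2

/-- Lemma `lem:Equ-Crit`: if `p₁, p₂ ∈ ℂ[x]` have degree `≤ n-2` and a `ℂ[x]`-algebra
automorphism `Φ` of `ℂ[x][z,t]` with `Φ ≡ id mod x` maps the ideal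
`(xⁿ, z² + t³ + x·p₁)` onto `(xⁿ, z² + t³ + x·p₂)`, then `p₁ = p₂`.
Here `ℂ[x][z,t]` is `MvPolynomial (Fin 2) (Polynomial ℂ)` with `z = X 0`, `t = X 1`. -/
theorem stmt5 (n : ℕ) (hn : 2 ≤ n) (p₁ p₂ : Polynomial ℂ)
    (hd₁ : p₁.natDegree ≤ n - 2) (hd₂ : p₂.natDegree ≤ n - 2)
    (Φ : MvPolynomial (Fin 2) (Polynomial ℂ) ≃ₐ[Polynomial ℂ]
          MvPolynomial (Fin 2) (Polynomial ℂ))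
    (hmodz : (C Polynomial.X : MvPolynomial (Fin 2) (Polynomial ℂ)) ∣ Φ (X 0) - X 0)
    (hmodt : (C Polynomial.X : MvPolynomial (Fin 2) (Polynomial ℂ)) ∣ Φ (X 1) - X 1)
    (hmap : Ideal.map (Φ : MvPolynomial (Fin 2) (Polynomial ℂ) →+*
          MvPolynomial (Fin 2) (Polynomial ℂ))
        (Ideal.span {(C (Polynomial.X ^ n) : MvPolynomial (Fin 2) (Polynomial ℂ)),
          X 0 ^ 2 + X 1 ^ 3 + C (Polynomial.X * p₁)}) =
      Ideal.span {(C (Polynomial.X ^ n) : MvPolynomial (Fin 2) (Polynomial ℂ)),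
        X 0 ^ 2 + X 1 ^ 3 + C (Polynomial.X * p₂)}) :
    p₁ = p₂ := by
  set s₁ := Polynomial.X * p₁ with hs₁
  set s₂ := Polynomial.X * p₂ with hs₂
  -- small degree and divisible by `x ^ n` forces vanishing
  have hsmall : ∀ p : Polynomial ℂ, p.natDegree ≤ n - 2 →
      Polynomial.X ^ n ∣ Polynomial.X * p → p = 0 := by
    intro p hp hdvd
    by_contra hne
    have h1 := Polynomial.natDegree_le_of_dvd hdvd (mul_ne_zero Polynomial.X_ne_zero hne)
    rw [Polynomial.natDegree_X_pow, Polynomial.natDegree_X_mul hne] at h1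
    omega
  by_contra hne
  have hlead := fun m hm h₂ => leading n m hm s₁ s₂ (Dvd.intro _ rfl) (Dvd.intro _ rfl) h₂ Φ hmodz hmodt hmap
  -- `s₂` is not divisible by `x ^ n`
  have hex : ¬ Polynomial.X ^ n ∣ s₂ := by
    intro hd
    have h1 := hlead (n - 1) (by omega) ((pow_dvd_pow _ (by omega)).trans hd)
    rw [show n - 1 + 1 = n by omega] at h1
    have h3 : Polynomial.X ^ n ∣ s₁ := by
      have := dvd_add h1 hd
      rwa [sub_add_cancel] at this
    exact hne ((hsmall p₁ hd₁ h3).trans (hsmall p₂ hd₂ hd).symm)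
  classical
  have hex' : ∃ k, ¬ Polynomial.X ^ (k + 1) ∣ s₂ := ⟨n, fun h => hex ((pow_dvd_pow _ (by omega)).trans h)⟩
  obtain ⟨m, hm, hmin⟩ : ∃ m, ¬ Polynomial.X ^ (m + 1) ∣ s₂ ∧ Polynomial.X ^ m ∣ s₂ := by
    refine ⟨Nat.find hex', Nat.find_spec hex', ?_⟩
    rcases h : Nat.find hex' with _ | k
    · simp
    · have := Nat.find_min hex' (m := k) (by omega)
      exact not_not.1 this
  have hmn : m < n := by
    by_contra hle
    exact hex ((pow_dvd_pow _ (by omega)).trans hmin)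
  have h1 := hlead m hmn hmin
  obtain ⟨σ₂, hσ₂⟩ := hmin
  obtain ⟨d, hd⟩ := h1
  set σ₁ := σ₂ + Polynomial.X * d with hσ₁d
  have hσ₁ : s₁ = Polynomial.X ^ m * σ₁ := by
    rw [hσ₁d]; linear_combination hd + hσ₂
  have h0 : ¬ Polynomial.X ∣ σ₂ := by
    intro h
    apply hm
    rw [hσ₂, pow_succ]
    exact mul_dvd_mul_left _ h
  rw [hσ₁, hσ₂] at hmap
  have hW := wronskian n m σ₁ σ₂ Φ hmap
  have hfin := finish n m σ₁ σ₂ h0 ⟨d, by rw [hσ₁d]; ring⟩ hW (n - 1 - m) (by omega)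
  have hfin' : Polynomial.X ^ n ∣ Polynomial.X * (p₁ - p₂) := by
    have e : Polynomial.X * (p₁ - p₂) = Polynomial.X ^ m * (σ₁ - σ₂) := by
      rw [mul_sub, mul_sub, ← hσ₁, ← hσ₂]
    rw [e, show n = m + (n - 1 - m + 1) by omega, pow_add]
    refine mul_dvd_mul_left _ ?_
    convert hfin using 2
  refine hne (sub_eq_zero.1 (hsmall _ ?_ hfin'))
  exact (Polynomial.natDegree_sub_le _ _).trans (max_le hd₁ hd₂)
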